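/- Let σ > 0, c > 0 and K < 0, and define F(y) = G(y, σ·(Ky + c)) for y ≤ 0. Then F is differentiable on (−∞, 0) and its derivative F′(y) tends to 0 as y → −∞. -/

import Mathlib

/-
In terms of the standard normal CDF `Φ` and density `φ`, `G(y, s) = Φ(y / s)`. Hence, with
`u = y / s(y)`, `F(y) = G(y, s(y))` has derivative
`F'(y) = φ(u) * (s(y) - y * s'(y)) / s(y)² = (u * φ(u)) * (1 - y * s'(y) / s(y)) * y⁻¹`.
The function `u ↦ u * φ(u)` is bounded, so `F'(y) = O(1 / y)` at `-∞` as soon as the elasticity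
`y * s'(y) / s(y)` of the scale is bounded, which is the case for affine `s`.
-/

/-- The CDF at `y` of a centered normal distribution with standard deviation `s`. -/
noncomputable def gaussCDF (y s : ℝ) : ℝ :=
  (Real.sqrt (2 * Real.pi * s ^ 2))⁻¹ * ∫ x in Set.Iic y, Real.exp (-x ^ 2 / (2 * s ^ 2))

open Asymptotics Filter MeasureTheory ProbabilityTheory Set Topology
open scoped NNReal

section Integral

variable {E : Type*} [NormedAddCommGroup E] [NormedSpace ℝ E] [CompleteSpace E]

lemma hasDerivAt_integral_Iic {f : ℝ → E} {b x : ℝ} (hf : IntegrableOn f (Iic b)) (hxb : x < b)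
    (hfx : ContinuousAt f x) :
    HasDerivAt (fun u ↦ ∫ t in Iic u, f t) (f x) x := by
  have hmeas : StronglyMeasurableAtFilter f (𝓝 x) :=
    ⟨Iic b, Iic_mem_nhds hxb, hf.aestronglyMeasurable⟩
  have hderiv : HasDerivAt (fun u ↦ (∫ t in x..u, f t) + ∫ t in Iic x, f t) (f x) x :=
    (intervalIntegral.integral_hasDerivAt_right IntervalIntegrable.refl hmeas hfx).add_const _
  refine hderiv.congr_of_eventuallyEq ?_
  filter_upwards [Iio_mem_nhds hxb] with u hu
  rw [← intervalIntegral.integral_Iic_sub_Iic (hf.mono_set (Iic_subset_Iic.2 hxb.le))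
    (hf.mono_set (Iic_subset_Iic.2 (mem_Iio.1 hu).le)), sub_add_cancel]

end Integral

section Gaussian

variable (μ : ℝ) (v : ℝ≥0)

lemma continuous_gaussianPDFReal : Continuous (gaussianPDFReal μ v) := by
  rw [gaussianPDFReal_def]
  fun_prop

variable {v} in
lemma cdf_gaussianReal_eq_integral (hv : v ≠ 0) (x : ℝ) :
    cdf (gaussianReal μ v) x = ∫ t in Iic x, gaussianPDFReal μ v t := by
  rw [cdf_eq_real, measureReal_def, gaussianReal_apply_eq_integral μ hv,
    ENNReal.toReal_ofReal (integral_nonneg (gaussianPDFReal_nonneg μ v))]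

variable {v} in
lemma hasDerivAt_cdf_gaussianReal (hv : v ≠ 0) (x : ℝ) :
    HasDerivAt (cdf (gaussianReal μ v)) (gaussianPDFReal μ v x) x := by
  rw [funext (cdf_gaussianReal_eq_integral μ hv)]
  exact hasDerivAt_integral_Iic (integrable_gaussianPDFReal μ v).integrableOn (lt_add_one x)
    (continuous_gaussianPDFReal μ v).continuousAt

lemma cdf_gaussianReal_div {s : ℝ} (hs : 0 < s) (x : ℝ) :
    cdf (gaussianReal μ v) (x / s) =
      cdf (gaussianReal (s * μ) (.mk (s ^ 2) (sq_nonneg s) * v)) x := by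
  have hpreimage : (s * ·) ⁻¹' Iic x = Iic (x / s) := by
    ext t
    simp only [mem_preimage, mem_Iic, le_div_iff₀' hs]
  rw [cdf_eq_real, cdf_eq_real, ← gaussianReal_map_const_mul,
    map_measureReal_apply (by fun_prop) measurableSet_Iic, hpreimage]

lemma abs_sub_mul_gaussianPDFReal_le_one (x : ℝ) :
    |(x - μ) * gaussianPDFReal μ v x| ≤ 1 := by
  rcases eq_or_ne v 0 with rfl | hv
  · simp
  have hv : (0 : ℝ) < v := by positivity
  set d := x - μ
  have hsqrt : √(2 * Real.pi * v) ^ 2 = 2 * Real.pi * v := Real.sq_sqrt (by positivity)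
  have hexp : Real.exp (-d ^ 2 / (2 * v)) ^ 2 = (Real.exp (d ^ 2 / v))⁻¹ := by
    rw [← Real.exp_nat_mul, ← Real.exp_neg]
    congr 1
    push_cast
    field_simp
  have hle : d ^ 2 ≤ 2 * Real.pi * v * Real.exp (d ^ 2 / v) :=
    calc d ^ 2 = v * (d ^ 2 / v) := by field_simp
      _ ≤ v * Real.exp (d ^ 2 / v) := by
        gcongr
        linarith [Real.add_one_le_exp (d ^ 2 / v)]
      _ ≤ 2 * Real.pi * v * Real.exp (d ^ 2 / v) := by
        gcongr
        nlinarith [Real.pi_gt_three]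
  rw [← sq_le_one_iff_abs_le_one, gaussianPDFReal, mul_pow, mul_pow, inv_pow, hsqrt, hexp,
    ← mul_inv, ← div_eq_mul_inv]
  exact div_le_one_of_le₀ hle (by positivity)

end Gaussian

lemma gaussCDF_eq_cdf_gaussianReal (y : ℝ) {s : ℝ} (hs : s ≠ 0) :
    gaussCDF y s = cdf (gaussianReal 0 (.mk (s ^ 2) (sq_nonneg s))) y := by
  have hvar : NNReal.mk (s ^ 2) (sq_nonneg s) ≠ 0 := by
    simpa [← NNReal.coe_ne_zero] using hs
  rw [cdf_gaussianReal_eq_integral 0 hvar, gaussCDF, ← integral_const_mul]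
  simp only [gaussianPDFReal, NNReal.coe_mk, sub_zero]

lemma gaussCDF_eq_cdf_div (y : ℝ) {s : ℝ} (hs : 0 < s) :
    gaussCDF y s = cdf (gaussianReal 0 1) (y / s) := by
  rw [gaussCDF_eq_cdf_gaussianReal y hs.ne', cdf_gaussianReal_div 0 1 hs, mul_zero, mul_one]

lemma hasDerivAt_gaussCDF_comp {s : ℝ → ℝ} {s' y : ℝ} (hs : HasDerivAt s s' y) (hpos : 0 < s y) :
    HasDerivAt (fun z ↦ gaussCDF z (s z))
      (gaussianPDFReal 0 1 (y / s y) * ((s y - y * s') / s y ^ 2)) y := by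
  have hquot : HasDerivAt (fun z ↦ z / s z) ((s y - y * s') / s y ^ 2) y := by
    simpa only [id, one_mul] using! (hasDerivAt_id y).div hs hpos.ne'
  refine ((hasDerivAt_cdf_gaussianReal 0 one_ne_zero (y / s y)).comp y hquot)
    |>.congr_of_eventuallyEq ?_
  filter_upwards [hs.continuousAt.eventually (lt_mem_nhds hpos)] with z hz
  exact gaussCDF_eq_cdf_div z hz

lemma tendsto_deriv_gaussCDF_comp_atBot {s s' : ℝ → ℝ}
    (hs : ∀ᶠ y in atBot, HasDerivAt s (s' y) y) (hpos : ∀ᶠ y in atBot, 0 < s y)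
    (helast : (fun y ↦ y * s' y) =O[atBot] s) :
    Tendsto (deriv fun y ↦ gaussCDF y (s y)) atBot (𝓝 0) := by
  have hpdf : (fun y ↦ y / s y * gaussianPDFReal 0 1 (y / s y)) =O[atBot] fun _ ↦ (1 : ℝ) :=
    .of_bound' <| .of_forall fun y ↦ by
      simpa only [sub_zero, Real.norm_eq_abs, abs_one] using
        abs_sub_mul_gaussianPDFReal_le_one 0 1 (y / s y)
  have hnum : (fun y ↦ s y - y * s' y) =O[atBot] s := (isBigO_refl s atBot).sub helast
  have hratio : (fun y ↦ (s y - y * s' y) / s y) =O[atBot] fun _ ↦ (1 : ℝ) :=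
    (isBigO_one_iff ℝ).2 (div_isBoundedUnder_of_isBigO hnum)
  have hinv : (fun y : ℝ ↦ y⁻¹) =o[atBot] fun _ ↦ (1 : ℝ) :=
    (isLittleO_one_iff ℝ).2 tendsto_inv_atBot_zero
  have hprod := (isLittleO_one_iff ℝ).1 <|
    ((hpdf.mul hratio).mul_isLittleO hinv).congr_right fun _ ↦ by norm_num
  refine hprod.congr' ?_
  filter_upwards [hs, hpos, eventually_ne_atBot 0] with y hsy hy hy0
  rw [(hasDerivAt_gaussCDF_comp hsy hy).deriv]
  field_simp

/-- The standard deviation `σ * (K * y + c)`, affine in the evaluation point `y`. -/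
def affineScale (σ c K y : ℝ) : ℝ := σ * (K * y + c)

lemma affineScale_pos {σ c K y : ℝ} (hσ : 0 < σ) (hc : 0 < c) (hK : K ≤ 0) (hy : y ≤ 0) :
    0 < affineScale σ c K y :=
  mul_pos hσ (add_pos_of_nonneg_of_pos (mul_nonneg_of_nonpos_of_nonpos hK hy) hc)

lemma hasDerivAt_affineScale (σ c K y : ℝ) : HasDerivAt (affineScale σ c K) (σ * K) y := by
  simpa only [mul_one] using! (((hasDerivAt_id y).const_mul K).add_const c).const_mul σ

lemma isBigO_mul_deriv_affineScale (σ c K : ℝ) :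
    (fun y ↦ y * (σ * K)) =O[atBot] affineScale σ c K := by
  rcases eq_or_ne K 0 with rfl | hK
  · simpa only [mul_zero] using isBigO_zero _ _
  have hconst : (fun _ ↦ c) =o[atBot] fun y ↦ K * y :=
    (isLittleO_const_id_atBot c).const_mul_right hK
  refine ((isBigO_refl (fun _ ↦ σ) atBot).mul hconst.right_isBigO_add).congr
    (fun y ↦ ?_) (fun y ↦ ?_)
  · ring
  · rw [affineScale, add_comm]

theorem random_limit_normal_stmt13_general {s s' F : ℝ → ℝ}
    (hs : ∀ y < 0, HasDerivAt s (s' y) y) (hpos : ∀ y < 0, 0 < s y)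
    (helast : (fun y ↦ y * s' y) =O[atBot] s) (hF : ∀ y < 0, F y = gaussCDF y (s y)) :
    DifferentiableOn ℝ F (Iio 0) ∧ Tendsto (deriv F) atBot (𝓝 0) := by
  have hneg : ∀ᶠ y : ℝ in atBot, y < 0 := eventually_lt_atBot 0
  constructor
  · refine DifferentiableOn.congr (fun y hy ↦ ?_) hF
    exact (hasDerivAt_gaussCDF_comp (hs y hy) (hpos y hy)).differentiableAt.differentiableWithinAt
  · refine (tendsto_deriv_gaussCDF_comp_atBot (hneg.mono hs) (hneg.mono hpos) helast).congr' ?_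
    filter_upwards [hneg] with y hy
    have hFy : F =ᶠ[𝓝 y] fun z ↦ gaussCDF z (s z) := eventually_of_mem (Iio_mem_nhds hy) hF
    exact hFy.deriv_eq.symm

/-- For `σ > 0`, `c > 0`, `K < 0`, the function `F(y) = G(y, σ (K y + c))` is
differentiable on `(-∞, 0)` and its derivative tends to `0` as `y → -∞`. -/
theorem random_limit_normal_stmt13
    (σ c K : ℝ) (hσ : 0 < σ) (hc : 0 < c) (hK : K < 0)
    (F : ℝ → ℝ) (hF : ∀ y ≤ 0, F y = gaussCDF y (σ * (K * y + c))) :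
    DifferentiableOn ℝ F (Set.Iio 0) ∧
    Filter.Tendsto (deriv F) Filter.atBot (nhds 0) := by
  exact random_limit_normal_stmt13_general (fun y _ ↦ hasDerivAt_affineScale σ c K y)
    (fun y hy ↦ affineScale_pos hσ hc hK.le hy.le) (isBigO_mul_deriv_affineScale σ c K)
    fun y hy ↦ hF y hy.le
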